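/- For an IPPA sequence on a proper, convex, lower semicontinuous function h (no assumptions on the errors beyond nonnegativity and positivity of the step sizes), the squared norms of the exact proximal subgradients almost decrease: for every k ≥ 1, ‖s⋆^{k+1}‖² − ‖s⋆^{k}‖² ≤ (ε_k/γ_k)². -/

import Mathlib

open scoped RealInnerProductSpace
open Filter Asymptotics

noncomputable section

/-- The Fenchel conjugate of an `EReal`-valued function on a real inner product space. -/
def fenchel {Y : Type*} [NormedAddCommGroup Y] [InnerProductSpace ℝ Y]
    (h : Y → EReal) (s : Y) : EReal :=
  ⨆ l : Y, ((⟪s, l⟫ : ℝ) : EReal) - h l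

/-- The convex subdifferential of an `EReal`-valued function: `v ∈ ∂h(u)` iff
`h w ≥ h u + ⟪v, w − u⟫` for all `w`. -/
def subdiff {Y : Type*} [NormedAddCommGroup Y] [InnerProductSpace ℝ Y]
    (h : Y → EReal) (u : Y) : Set Y :=
  {v : Y | ∀ w : Y, h u + ((⟪v, w - u⟫ : ℝ) : EReal) ≤ h w}

theorem prox_finite {Y : Type*} [NormedAddCommGroup Y]
    (h : Y → EReal) (hh_bot : ∀ u : Y, h u ≠ ⊥) (hh_top : ∃ u : Y, h u ≠ ⊤)
    (z p : Y) (g : ℝ)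
    (hmin : ∀ μ : Y, h p + ((‖z - p‖ ^ 2 / (2 * g) : ℝ) : EReal)
        ≤ h μ + ((‖z - μ‖ ^ 2 / (2 * g) : ℝ) : EReal)) :
    ∃ r : ℝ, h p = (r : EReal) := by
  obtain ⟨u, hu⟩ := hh_top
  have hp : h p ≠ ⊤ := by
    intro hp
    have h1 := hmin u
    lift h u to ℝ using ⟨hu, hh_bot u⟩ with r
    rw [hp, EReal.top_add_coe, ← EReal.coe_add] at h1
    exact EReal.coe_ne_top _ (top_le_iff.mp h1)
  exact ⟨(h p).toReal, (EReal.coe_toReal hp (hh_bot p)).symm⟩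

theorem prox_subgrad {Y : Type*} [NormedAddCommGroup Y] [InnerProductSpace ℝ Y]
    (h : Y → EReal)
    (hh_cvx : ∀ u v : Y, ∀ a b : ℝ, 0 ≤ a → 0 ≤ b → a + b = 1 →
      h (a • u + b • v) ≤ (a : EReal) * h u + (b : EReal) * h v)
    (z p q : Y) (g : ℝ) (hg : 0 < g)
    (hmin : ∀ μ : Y, h p + ((‖z - p‖ ^ 2 / (2 * g) : ℝ) : EReal)
        ≤ h μ + ((‖z - μ‖ ^ 2 / (2 * g) : ℝ) : EReal))
    (P Q : ℝ) (hP : h p = (P : EReal)) (hQ : h q = (Q : EReal)) :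
    P + ⟪g⁻¹ • (z - p), q - p⟫ ≤ Q := by
  have key : ∀ t : ℝ, 0 < t → t ≤ 1 →
      P + ⟪g⁻¹ • (z - p), q - p⟫ - Q ≤ t * (‖q - p‖ ^ 2 / (2 * g)) := by
    intro t ht ht1
    have h1 := (hmin ((1 - t) • p + t • q)).trans
      (add_le_add_left (hh_cvx p q (1 - t) t (by linarith) ht.le (by ring)) _)
    rw [hP, hQ] at h1
    norm_cast at h1
    have e1 : z - ((1 - t) • p + t • q) = (z - p) - t • (q - p) := by module
    rw [e1, norm_sub_sq_real (z - p), inner_smul_right, norm_smul, mul_pow, Real.norm_eq_abs, sq_abs] at h1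
    rw [real_inner_smul_left]
    have e2 : (‖z - p‖ ^ 2 - 2 * (t * ⟪z - p, q - p⟫) + t ^ 2 * ‖q - p‖ ^ 2) / (2 * g)
        = ‖z - p‖ ^ 2 / (2 * g) - t * (g⁻¹ * ⟪z - p, q - p⟫)
          + t * (t * (‖q - p‖ ^ 2 / (2 * g))) := by
      field_simp
    rw [e2] at h1
    refine le_of_mul_le_mul_left ?_ ht
    linarith
  have hB : 0 ≤ ‖q - p‖ ^ 2 / (2 * g) := by positivity
  generalize ‖q - p‖ ^ 2 / (2 * g) = B at key hB
  by_contra hc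
  have hA : 0 < P + ⟪g⁻¹ • (z - p), q - p⟫ - Q := by linarith
  generalize P + ⟪g⁻¹ • (z - p), q - p⟫ - Q = A at key hA
  have h2 := key (A / (A + B + 1)) (by positivity)
    (by rw [div_le_one (by positivity)]; linarith)
  rw [div_mul_eq_mul_div, le_div_iff₀ (by positivity)] at h2
  nlinarith

theorem statement5
    {Y : Type*}
    [NormedAddCommGroup Y] [InnerProductSpace ℝ Y] [CompleteSpace Y]
    (h : Y → EReal)
    (hh_bot : ∀ u : Y, h u ≠ ⊥) (hh_top : ∃ u : Y, h u ≠ ⊤)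
    (hh_lsc : LowerSemicontinuous h)
    (hh_cvx : ∀ u v : Y, ∀ a b : ℝ, 0 ≤ a → 0 ≤ b → a + b = 1 →
      h (a • u + b • v) ≤ (a : EReal) * h u + (b : EReal) * h v)
    (γ : ℕ → ℝ) (hγ : ∀ k : ℕ, 0 < γ k) (ε : ℕ → ℝ) (hε : ∀ k : ℕ, 0 ≤ ε k)
    (lam lamstar sstar ss : ℕ → Y)
    (hmin : ∀ (k : ℕ) (μ : Y),
      h (lamstar (k+1)) + ((‖lam k - lamstar (k+1)‖ ^ 2 / (2 * γ k) : ℝ) : EReal)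
        ≤ h μ + ((‖lam k - μ‖ ^ 2 / (2 * γ k) : ℝ) : EReal))
    (hsstar : ∀ k : ℕ, sstar (k+1) = (γ k)⁻¹ • (lam k - lamstar (k+1)))
    (herr : ∀ k : ℕ, ‖lam (k+1) - lamstar (k+1)‖ ≤ ε (k+1))
    (hss : ∀ k : ℕ, ss (k+1) = (γ k)⁻¹ • (lam k - lam (k+1)))
    :
    ∀ k : ℕ, 1 ≤ k → ‖sstar (k+1)‖ ^ 2 - ‖sstar k‖ ^ 2 ≤ (ε k / γ k) ^ 2 := by
  intro k hk
  obtain ⟨j, rfl⟩ : ∃ j, k = j + 1 := ⟨k - 1, by omega⟩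
  obtain ⟨P, hP⟩ := prox_finite h hh_bot hh_top _ _ _ (hmin j)
  obtain ⟨Q, hQ⟩ := prox_finite h hh_bot hh_top _ _ _ (hmin (j + 1))
  have h1 := prox_subgrad h hh_cvx _ _ _ _ (hγ j) (hmin j) P Q hP hQ
  have h2 := prox_subgrad h hh_cvx _ _ _ _ (hγ (j + 1)) (hmin (j + 1)) Q P hQ hP
  rw [← hsstar] at h1 h2
  have hg := hγ (j + 1)
  have he := herr j
  have hs := hsstar (j + 1)
  generalize sstar (j + 1 + 1) = a at *
  generalize sstar (j + 1) = b at *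
  obtain ⟨f, hf⟩ : ∃ f : Y, f = (γ (j + 1))⁻¹ • (lam (j + 1) - lamstar (j + 1)) := ⟨_, rfl⟩
  have hd : lamstar (j + 1 + 1) - lamstar (j + 1) = γ (j + 1) • (f - a) := by
    rw [hs, hf, ← smul_sub, smul_inv_smul₀ hg.ne']
    abel
  have hd' : lamstar (j + 1) - lamstar (j + 1 + 1) = -(γ (j + 1) • (f - a)) := by
    rw [← hd]; abel
  rw [hd, inner_smul_right] at h1
  rw [hd', inner_neg_right, inner_smul_right] at h2
  have h3 : 0 ≤ ⟪a, f - a⟫ - ⟪b, f - a⟫ := by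
    refine le_of_mul_le_mul_left ?_ hg
    linarith
  have hfn : ‖f‖ ≤ ε (j + 1) / γ (j + 1) := by
    rw [hf, norm_smul, norm_inv, Real.norm_eq_abs, abs_of_pos hg, inv_mul_eq_div]
    gcongr
  have h4 : ‖f‖ ^ 2 ≤ (ε (j + 1) / γ (j + 1)) ^ 2 := by gcongr
  have h5 : 0 ≤ ‖(a - b) - f‖ ^ 2 := by positivity
  rw [norm_sub_sq_real, norm_sub_sq_real, inner_sub_left] at h5
  rw [inner_sub_right, inner_sub_right, real_inner_self_eq_norm_sq, real_inner_comm a b] at h3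
  linarith
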